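/- arXiv:2403.08745 — 2 statements merged into one kernel-verified Lean document; each statement's English description precedes it below -/
import Mathlib

section
/- Let a, θ > 0. Then for every x ∈ ℝ, H_{a,θ}(ix) is a positive real number and H_{a,θ}(ix) ≥ exp(a|x|/(2√(θ+1))) / (11√(θ+1)). -/
/-!
On the imaginary axis `H_{a,θ}(ix)` is the real quotient `(∫ σ_θ(t) e^{axt} dt) / (∫ σ_θ(t) dt)`.
As `σ_θ` is even, `x` may be replaced by `|x|`. Put `s = √(θ+1)`. On `[1/(2s), 1/s]` one has
`1 - t² ≥ θ/(θ+1)`, so `σ_θ(t) ≥ e^{-θ-1}`, while `e^{a|x|t} ≥ e^{a|x|/(2s)}`; hence the numerator is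
at least `e^{-θ-1} e^{a|x|/(2s)} / (2s)` (`integral_sigma_exp_ge`). The denominator is at most
`2 e^{-θ}` because `σ_θ ≤ e^{-θ}`. The quotient is thus at least `e^{a|x|/(2s)} / (4 e s)`, and
`4 e < 11`.
-/


open Set

/-- The bump function `σ_θ(t) = exp(−θ/(1−t²))` on `(−1,1)`, extended by `0` outside. -/
noncomputable def sigmaFun (θ : ℝ) (t : ℝ) : ℝ :=
  if t ∈ Ioo (-1 : ℝ) 1 then Real.exp (-θ / (1 - t ^ 2)) else 0

/-- The multiplier `H_{a,θ}(z) = C_θ ∫_{−1}^{1} σ_θ(t) exp(−iatz) dt`,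
where `C_θ = (∫_{−1}^{1} σ_θ)⁻¹`. -/
noncomputable def Hfun (a θ : ℝ) (z : ℂ) : ℂ :=
  (((∫ t in (-1:ℝ)..1, sigmaFun θ t)⁻¹ : ℝ) : ℂ)
    * ∫ t in (-1:ℝ)..1, (sigmaFun θ t : ℂ) * Complex.exp (-Complex.I * a * t * z)

lemma sigmaFun_nonneg (θ t : ℝ) : 0 ≤ sigmaFun θ t := by
  unfold sigmaFun
  split_ifs
  · positivity
  · exact le_rfl

lemma sigmaFun_le {θ : ℝ} (hθ : 0 < θ) (t : ℝ) : sigmaFun θ t ≤ Real.exp (-θ) := by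
  unfold sigmaFun
  split_ifs with h
  · have h1 : 0 < 1 - t ^ 2 := by nlinarith [h.1, h.2]
    apply Real.exp_le_exp.2
    rw [div_le_iff₀ h1]
    nlinarith [mul_nonneg hθ.le (sq_nonneg t)]
  · positivity

lemma sigmaFun_neg (θ t : ℝ) : sigmaFun θ (-t) = sigmaFun θ t := by
  have : (-t ∈ Ioo (-1 : ℝ) 1) ↔ t ∈ Ioo (-1 : ℝ) 1 := by
    constructor <;> rintro ⟨h1, h2⟩ <;> constructor <;> linarith
  simp only [sigmaFun, this, neg_sq]

lemma measurable_sigmaFun (θ : ℝ) : Measurable (sigmaFun θ) := by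
  unfold sigmaFun
  exact Measurable.ite measurableSet_Ioo (by fun_prop) measurable_const

lemma intervalIntegrable_sigmaFun {θ : ℝ} (hθ : 0 < θ) (u v : ℝ) :
    IntervalIntegrable (sigmaFun θ) MeasureTheory.volume u v := by
  refine (intervalIntegrable_const (c := Real.exp (-θ))).mono_fun
    (measurable_sigmaFun θ).aestronglyMeasurable (Filter.Eventually.of_forall fun t => ?_)
  simp only [Real.norm_eq_abs, abs_of_nonneg (sigmaFun_nonneg θ t), Real.abs_exp]
  exact sigmaFun_le hθ t

lemma intervalIntegrable_sigmaFun_exp {θ : ℝ} (hθ : 0 < θ) (b u v : ℝ) :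
    IntervalIntegrable (fun t => sigmaFun θ t * Real.exp (b * t)) MeasureTheory.volume u v :=
  (intervalIntegrable_sigmaFun hθ u v).mul_continuousOn (by fun_prop)

lemma integral_sigma_exp_abs (θ b : ℝ) :
    ∫ t in (-1:ℝ)..1, sigmaFun θ t * Real.exp (b * t)
      = ∫ t in (-1:ℝ)..1, sigmaFun θ t * Real.exp (|b| * t) := by
  rcases abs_cases b with ⟨h, -⟩ | ⟨h, -⟩
  · rw [h]
  · have := intervalIntegral.integral_comp_neg (a := -1) (b := 1)
      (fun t => sigmaFun θ t * Real.exp (b * t))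
    simp only [neg_neg, sigmaFun_neg] at this
    rw [h, ← this]
    simp only [mul_neg, neg_mul]

lemma sigmaFun_ge {θ t : ℝ} (hθ : 0 < θ) (h0 : 0 ≤ t) (ht : t ≤ 1 / Real.sqrt (θ + 1)) :
    Real.exp (-θ - 1) ≤ sigmaFun θ t := by
  have hs2 : Real.sqrt (θ + 1) ^ 2 = θ + 1 := Real.sq_sqrt (by linarith)
  have hs : 0 < Real.sqrt (θ + 1) := Real.sqrt_pos.2 (by linarith)
  have hsq : t ^ 2 * (θ + 1) ≤ 1 := by
    rw [le_div_iff₀ hs] at ht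
    rw [← hs2, ← mul_pow]
    exact pow_le_one₀ (by positivity) ht
  have ht2 : t ^ 2 < 1 := by
    by_contra! h
    nlinarith
  have ht1 : t < 1 := by nlinarith
  rw [sigmaFun, if_pos ⟨by linarith, ht1⟩]
  apply Real.exp_le_exp.2
  rw [le_div_iff₀ (by linarith)]
  nlinarith

lemma integral_sigma_exp_ge {θ b : ℝ} (hθ : 0 < θ) (hb : 0 ≤ b) :
    1 / (2 * Real.sqrt (θ + 1)) * (Real.exp (-θ - 1) * Real.exp (b / (2 * Real.sqrt (θ + 1))))
      ≤ ∫ t in (-1:ℝ)..1, sigmaFun θ t * Real.exp (b * t) := by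
  set s := Real.sqrt (θ + 1) with hs
  have hs1 : 1 ≤ s := Real.one_le_sqrt.2 (by linarith)
  have h0 : 0 ≤ 1 / (2 * s) := by positivity
  have h12 : 1 / (2 * s) ≤ 1 / s := one_div_le_one_div_of_le (by linarith) (by linarith)
  have h1 : 1 / s ≤ 1 := by rw [div_le_one (by linarith)]; exact hs1
  calc _ = ∫ _ in (1 / (2 * s))..(1 / s), Real.exp (-θ - 1) * Real.exp (b / (2 * s)) := by
        rw [intervalIntegral.integral_const, smul_eq_mul]
        congr 1
        field_simp
        norm_num
    _ ≤ ∫ t in (1 / (2 * s))..(1 / s), sigmaFun θ t * Real.exp (b * t) := by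
        refine intervalIntegral.integral_mono_on h12 intervalIntegrable_const
          (intervalIntegrable_sigmaFun_exp hθ b _ _) fun t ht => ?_
        refine mul_le_mul (sigmaFun_ge hθ (h0.trans ht.1) ht.2) (Real.exp_le_exp.2 ?_)
          (Real.exp_pos _).le (sigmaFun_nonneg θ t)
        rw [div_eq_mul_one_div]
        exact mul_le_mul_of_nonneg_left ht.1 hb
    _ ≤ _ := by
        refine intervalIntegral.integral_mono_interval (by linarith) h12 h1
          (Filter.Eventually.of_forall fun t => ?_) (intervalIntegrable_sigmaFun_exp hθ b _ _)
        exact mul_nonneg (sigmaFun_nonneg θ t) (Real.exp_pos _).le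

lemma Hfun_I_mul (a θ x : ℝ) :
    Hfun a θ (Complex.I * x) = (((∫ t in (-1:ℝ)..1, sigmaFun θ t)⁻¹
      * ∫ t in (-1:ℝ)..1, sigmaFun θ t * Real.exp (a * x * t) : ℝ) : ℂ) := by
  rw [Hfun, Complex.ofReal_mul, ← intervalIntegral.integral_ofReal]
  congr 2
  ext t
  push_cast
  congr 2
  linear_combination (-(a : ℂ) * t * x) * Complex.I_mul_I

theorem stmt_13 (a θ : ℝ) (ha : 0 < a) (hθ : 0 < θ) :
    ∀ x : ℝ, (Hfun a θ (Complex.I * x)).im = 0 ∧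
      Real.exp (a * |x| / (2 * Real.sqrt (θ + 1))) / (11 * Real.sqrt (θ + 1))
        ≤ (Hfun a θ (Complex.I * x)).re := by
  intro x
  rw [Hfun_I_mul, Complex.ofReal_im, Complex.ofReal_re]
  refine ⟨rfl, ?_⟩
  rw [integral_sigma_exp_abs, abs_mul, abs_of_pos ha]
  have hI := integral_sigma_exp_ge hθ (b := a * |x|) (by positivity)
  have hs : 0 < Real.sqrt (θ + 1) := Real.sqrt_pos.2 (by linarith)
  have hpos : 0 < ∫ t in (-1:ℝ)..1, sigmaFun θ t := by
    have h := integral_sigma_exp_ge hθ (b := 0) le_rfl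
    simp only [zero_mul, Real.exp_zero, mul_one] at h
    exact lt_of_lt_of_le (by positivity) h
  have hle : ∫ t in (-1:ℝ)..1, sigmaFun θ t ≤ 2 * Real.exp (-θ) := by
    have h := intervalIntegral.integral_mono_on (by norm_num : (-1:ℝ) ≤ 1)
      (intervalIntegrable_sigmaFun hθ (-1) 1) intervalIntegrable_const
      fun t _ => sigmaFun_le hθ t
    rw [intervalIntegral.integral_const, smul_eq_mul] at h
    linarith
  rw [inv_mul_eq_div, le_div_iff₀ hpos]
  refine le_trans ?_ hI
  set E := Real.exp (a * |x| / (2 * Real.sqrt (θ + 1)))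
  set s := Real.sqrt (θ + 1)
  have hE : 0 < E := Real.exp_pos _
  -- This is where `4 e ≤ 11` enters.
  have hexp : 4 * Real.exp (-θ) ≤ 11 * Real.exp (-θ - 1) := by
    have h1 : Real.exp (-θ) = Real.exp (-θ - 1) * Real.exp 1 := by
      rw [← Real.exp_add]; congr 1; ring
    rw [h1]
    nlinarith [Real.exp_one_lt_d9, Real.exp_pos (-θ - 1)]
  calc E / (11 * s) * ∫ t in (-1:ℝ)..1, sigmaFun θ t
      ≤ E / (11 * s) * (11 / 2 * Real.exp (-θ - 1)) := by
        apply mul_le_mul_of_nonneg_left _ (by positivity)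
        linarith
    _ = _ := by field_simp
end

section
/- For every c > 0, the integral ∫₀^∞ log(x⁴/(c + x⁴)) dx converges and equals −√2 π c^{1/4}. -/
open Set MeasureTheory

/-!
Write `c = 4 b ^ 4` with `b = c ^ (1/4) / √2 > 0`. By Sophie Germain's identity
`x ^ 4 + 4 b ^ 4 = ((x + b) ^ 2 + b ^ 2) * ((x - b) ^ 2 + b ^ 2)`, so the integrand splits into
logarithms with elementary antiderivatives. With `G u = u log (u ^ 2 + b ^ 2) + 2 b arctan (u / b)`,
whose derivative is `log (u ^ 2 + b ^ 2) + 2`, the function `F x = 4 x log x - G (x + b) - G (x - b)`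
is an antiderivative on `(0, ∞)`. It is continuous at `0` with `F 0 = 0` because `G` is odd, and it
tends to `-2 π b = -√2 π c ^ (1/4)` at infinity. Since the integrand has constant sign, convergence
of `F` gives integrability as well as the value of the integral.
-/

open Filter Topology

/-- An antiderivative of `log (u ^ 2 + b ^ 2) + 2`. -/
noncomputable def logSqPrim (b u : ℝ) : ℝ :=
  u * Real.log (u ^ 2 + b ^ 2) + 2 * b * Real.arctan (u / b)

/-- An antiderivative of `log (x ^ 4 / (4 b ^ 4 + x ^ 4))` on `(0, ∞)`. -/
noncomputable def quarticPrim (b x : ℝ) : ℝ :=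
  4 * (x * Real.log x) - logSqPrim b (x + b) - logSqPrim b (x - b)

lemma logSqPrim_hasDerivAt {b : ℝ} (hb : 0 < b) (u : ℝ) :
    HasDerivAt (logSqPrim b) (Real.log (u ^ 2 + b ^ 2) + 2) u := by
  have hP : u ^ 2 + b ^ 2 ≠ 0 := by positivity
  have h1 : HasDerivAt (fun u : ℝ => u ^ 2 + b ^ 2) (2 * u) u := by
    simpa using (hasDerivAt_pow 2 u).add_const (b ^ 2)
  have h2 := (hasDerivAt_id u).mul (h1.log hP)
  have h3 := (((hasDerivAt_id u).div_const b).arctan).const_mul (2 * b)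
  refine (h2.add h3).congr_deriv ?_
  have h4 : 1 + (u / b) ^ 2 ≠ 0 := by positivity
  have h5 : b ^ 2 + u ^ 2 ≠ 0 := by positivity
  have h6 : 1 + (u / b) ^ 2 = (u ^ 2 + b ^ 2) / b ^ 2 := by field_simp; ring
  simp only [id, h6]
  field_simp
  ring

lemma sophie_germain (b x : ℝ) :
    4 * b ^ 4 + x ^ 4 = ((x + b) ^ 2 + b ^ 2) * ((x - b) ^ 2 + b ^ 2) := by ring

lemma log_quartic {b : ℝ} (hb : 0 < b) {x : ℝ} (hx : 0 < x) :
    Real.log (x ^ 4 / (4 * b ^ 4 + x ^ 4)) =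
      4 * Real.log x - Real.log ((x + b) ^ 2 + b ^ 2) - Real.log ((x - b) ^ 2 + b ^ 2) := by
  rw [Real.log_div (by positivity) (by positivity), sophie_germain,
    Real.log_mul (by positivity) (by positivity), Real.log_pow]
  push_cast
  ring

lemma quarticPrim_hasDerivAt {b : ℝ} (hb : 0 < b) {x : ℝ} (hx : 0 < x) :
    HasDerivAt (quarticPrim b) (Real.log (x ^ 4 / (4 * b ^ 4 + x ^ 4))) x := by
  have h1 := (Real.hasDerivAt_mul_log hx.ne').const_mul 4
  have h2 := (logSqPrim_hasDerivAt hb (x + b)).comp_add_const x b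
  have h3 := (logSqPrim_hasDerivAt hb (x - b)).comp_sub_const x b
  refine ((h1.sub h2).sub h3).congr_deriv ?_
  rw [log_quartic hb hx]
  ring

lemma quarticPrim_continuous {b : ℝ} (hb : 0 < b) : Continuous (quarticPrim b) := by
  have hG : Continuous (logSqPrim b) :=
    continuous_iff_continuousAt.2 fun u => (logSqPrim_hasDerivAt hb u).continuousAt
  have h := Real.continuous_mul_log
  unfold quarticPrim
  fun_prop

lemma quarticPrim_zero (b : ℝ) : quarticPrim b 0 = 0 := by
  simp only [quarticPrim, logSqPrim, zero_add, zero_sub, neg_div, Real.arctan_neg, neg_sq]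
  ring

/-- From `0 ≤ log (1 + t) ≤ t` with `t = 4 b ^ 4 / x ^ 4`. -/
lemma tendsto_mul_log_quartic {b : ℝ} (hb : 0 < b) :
    Tendsto (fun x : ℝ => x * Real.log (x ^ 4 / (4 * b ^ 4 + x ^ 4))) atTop (𝓝 0) := by
  have hlow : Tendsto (fun x : ℝ => -(4 * b ^ 4 / x ^ 3)) atTop (𝓝 0) := by
    simpa using (tendsto_const_nhds.div_atTop (tendsto_pow_atTop (α := ℝ) (n := 3) (by norm_num))
      : Tendsto (fun x : ℝ => 4 * b ^ 4 / x ^ 3) atTop (𝓝 0)).neg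
  refine tendsto_of_tendsto_of_tendsto_of_le_of_le' hlow tendsto_const_nhds ?_ ?_
  · filter_upwards [eventually_gt_atTop 0] with x hx
    have h := Real.one_sub_inv_le_log_of_pos (x := x ^ 4 / (4 * b ^ 4 + x ^ 4)) (by positivity)
    calc -(4 * b ^ 4 / x ^ 3) = x * (1 - (x ^ 4 / (4 * b ^ 4 + x ^ 4))⁻¹) := by
          field_simp; ring
      _ ≤ _ := by gcongr
  · filter_upwards [eventually_gt_atTop 0] with x hx
    refine mul_nonpos_of_nonneg_of_nonpos hx.le (Real.log_nonpos (by positivity) ?_)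
    rw [div_le_one (by positivity)]
    linarith [pow_pos hb 4]

lemma tendsto_log_ratio {b : ℝ} (hb : 0 < b) :
    Tendsto (fun x : ℝ => Real.log (((x + b) ^ 2 + b ^ 2) / ((x - b) ^ 2 + b ^ 2)))
      atTop (𝓝 0) := by
  have h0 : Tendsto (fun x : ℝ => b * x⁻¹) atTop (𝓝 0) := by
    simpa using tendsto_inv_atTop_zero.const_mul b
  have hratio : Tendsto (fun x : ℝ => ((x + b) ^ 2 + b ^ 2) / ((x - b) ^ 2 + b ^ 2))
      atTop (𝓝 1) := by
    have hcont : ContinuousAt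
        (fun t : ℝ => ((1 + t) ^ 2 + t ^ 2) / ((1 - t) ^ 2 + t ^ 2)) 0 := by
      apply ContinuousAt.div (by fun_prop) (by fun_prop) (by norm_num)
    have h1 := hcont.tendsto.comp h0
    norm_num at h1
    refine h1.congr' ?_
    filter_upwards [eventually_gt_atTop 0] with x hx
    have hQ : (x - b) ^ 2 + b ^ 2 ≠ 0 := by positivity
    have hQ' : (1 - b * x⁻¹) ^ 2 + (b * x⁻¹) ^ 2 ≠ 0 := by positivity
    simp only [Function.comp]
    rw [div_eq_div_iff hQ' hQ]
    field_simp
  simpa using hratio.log one_ne_zero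

lemma quarticPrim_tendsto {b : ℝ} (hb : 0 < b) :
    Tendsto (quarticPrim b) atTop (𝓝 (-(2 * Real.pi * b))) := by
  have hat : Tendsto Real.arctan atTop (𝓝 (Real.pi / 2)) :=
    tendsto_nhds_of_tendsto_nhdsWithin Real.tendsto_arctan_atTop
  have h1 : Tendsto (fun x : ℝ => Real.arctan ((x + b) / b)) atTop (𝓝 (Real.pi / 2)) :=
    hat.comp ((tendsto_atTop_add_const_right _ b tendsto_id).atTop_div_const hb)
  have h2 : Tendsto (fun x : ℝ => Real.arctan ((x - b) / b)) atTop (𝓝 (Real.pi / 2)) :=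
    hat.comp ((tendsto_atTop_add_const_right _ (-b) tendsto_id).atTop_div_const hb)
  have h := ((tendsto_mul_log_quartic hb).sub ((tendsto_log_ratio hb).const_mul b)).sub
    ((h1.add h2).const_mul (2 * b))
  have hlim : (0 : ℝ) - b * 0 - 2 * b * (Real.pi / 2 + Real.pi / 2) = -(2 * Real.pi * b) := by ring
  rw [hlim] at h
  refine h.congr' ?_
  filter_upwards [eventually_gt_atTop 0] with x hx
  rw [log_quartic hb hx, Real.log_div (by positivity) (by positivity)]
  simp only [quarticPrim, logSqPrim]
  ring

theorem stmt_19 (c : ℝ) (hc : 0 < c) :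
    IntegrableOn (fun x : ℝ => Real.log (x ^ 4 / (c + x ^ 4))) (Ioi 0) ∧
    ∫ x in Ioi (0:ℝ), Real.log (x ^ 4 / (c + x ^ 4))
      = -(Real.sqrt 2 * Real.pi * c ^ ((1:ℝ)/4)) := by
  obtain ⟨b, hb, hcb, hval⟩ : ∃ b : ℝ, 0 < b ∧ c = 4 * b ^ 4 ∧
      Real.sqrt 2 * Real.pi * c ^ ((1:ℝ)/4) = 2 * Real.pi * b := by
    have hs : Real.sqrt 2 ^ 2 = 2 := Real.sq_sqrt (by norm_num)
    have h4 : (c ^ ((1:ℝ)/4)) ^ 4 = c := by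
      rw [← Real.rpow_natCast, ← Real.rpow_mul hc.le]
      norm_num
    refine ⟨c ^ ((1:ℝ)/4) / Real.sqrt 2, by positivity, ?_, ?_⟩
    · have hs4 : Real.sqrt 2 ^ 4 = 4 := by
        rw [show Real.sqrt 2 ^ 4 = (Real.sqrt 2 ^ 2) ^ 2 by ring, hs]; norm_num
      rw [div_pow, h4, hs4]
      ring
    · rw [mul_div_assoc', eq_div_iff (by positivity)]
      linear_combination Real.pi * c ^ ((1:ℝ)/4) * hs
  rw [hval, hcb]
  have hcont := (quarticPrim_continuous hb).continuousWithinAt (s := Ici 0) (x := 0)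
  have hderiv := fun x (hx : x ∈ Ioi (0:ℝ)) => quarticPrim_hasDerivAt hb hx
  have hneg : ∀ x ∈ Ioi (0:ℝ), Real.log (x ^ 4 / (4 * b ^ 4 + x ^ 4)) ≤ 0 := by
    intro x hx
    refine Real.log_nonpos (by positivity) ?_
    rw [div_le_one (by positivity)]
    linarith [pow_pos hb 4]
  refine ⟨integrableOn_Ioi_deriv_of_nonpos hcont hderiv hneg (quarticPrim_tendsto hb), ?_⟩
  rw [integral_Ioi_of_hasDerivAt_of_nonpos hcont hderiv hneg (quarticPrim_tendsto hb),
    quarticPrim_zero, sub_zero]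
end
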